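/- arXiv:2401.15512 — 3 statements merged into one kernel-verified Lean document; each statement's English description precedes it below -/
import Mathlib

section
/- Let f be the higher energy function of order ℓ, strictly positive on (u, ∞), where u = r_ℓ is the largest zero of f when ℓ ≥ 1 and u = 0 when ℓ = 0. Let (x_n)_{n=1}^N (N ≥ 2) be a strictly increasing sequence in (u, ∞) satisfying 1/(x_{n+1}−x_n) = Σ_{k=n+1}^N (−f'(x_k)/f(x_k)) for all 1 ≤ n < N (as holds for the part of any MIW sequence with right boundary condition at +∞ contained in (u,∞)). Then x_N² ≥ Σ_{k=1}^{N−1} 1/k ≥ log N; in particular x_N ≥ √(log N). -/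
/-!
The lower bound on `x_N` follows from the one-sided estimate `-f'/f ≤ x` on `(u, ∞)` together with
`u ≥ 0`.

Since `-f'/f = x - 2 p_l'/p_l` and `p_l' = l p_{l-1}`, for `l ≥ 1` the estimate says that
`p_{l-1}` and `p_l` do not have opposite signs to the right of the zeros of `p_l` (`hermiteFun_mul_nonneg`). Real-rootedness is
not needed: `(p_{l-1} e^{-x²/2})' = -p_l e^{-x²/2}` has constant sign on `(u, ∞)`, and
`p_{l-1} e^{-x²/2}` tends to `0` at infinity. That `u ≥ 0` follows from the parity of `p_l`
(`largest_zero_nonneg`).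

Each of the `N - n` summands in the relation for `1/(x_{n+1} - x_n)` is then at most `x_N`, so
`x_{n+1} - x_n ≥ 1/((N - n) x_N)`. Summing over `n` gives `x_N (x_N - x_1) ≥ ∑ 1/k`, and `x_1 > 0`.
The comparison with `log N` is Mathlib's `log_add_one_le_harmonic`.
-/

open MeasureTheory Filter Set

noncomputable section

/-- The probabilists' Hermite polynomial `p_l(x) = (-1)^l e^{x^2/2} (d/dx)^l e^{-x^2/2}`
as a real function. -/
def hermiteFun (l : ℕ) (x : ℝ) : ℝ :=
  (-1 : ℝ) ^ l * Real.exp (x ^ 2 / 2) *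
    iteratedDeriv l (fun t => Real.exp (-t ^ 2 / 2)) x

/-- The higher energy function of order `l` with normalizing constant `c`. -/
def heFun (l : ℕ) (c : ℝ) (x : ℝ) : ℝ :=
  c * hermiteFun l x ^ 2 * Real.exp (-x ^ 2 / 2)

/-- `c` is the constant making `heFun l c` a probability density on `ℝ`. -/
def IsNormalizing (l : ℕ) (c : ℝ) : Prop :=
  0 < c ∧ (∫ x : ℝ, heFun l c x) = 1

/-- `(x n)_{n=1}^N` is an MIW sequence of `f` : strictly increasing, avoiding the
zeros of `f`, and satisfying the MIW recursion for `1 < n < N`. -/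
def IsMIW (f : ℝ → ℝ) (N : ℕ) (x : ℕ → ℝ) : Prop :=
  (∀ n, 1 ≤ n → n < N → x n < x (n + 1)) ∧
  (∀ n, 1 ≤ n → n ≤ N → f (x n) ≠ 0) ∧
  (∀ n, 1 < n → n < N →
    1 / (x (n + 1) - x n) - 1 / (x n - x (n - 1)) = deriv f (x n) / f (x n))

/-- Left boundary condition at `x_0 = -∞`. -/
def LeftBC (f : ℝ → ℝ) (x : ℕ → ℝ) : Prop :=
  1 / (x 2 - x 1) = deriv f (x 1) / f (x 1)

/-- Right boundary condition at `x_{N+1} = +∞`. -/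
def RightBC (f : ℝ → ℝ) (N : ℕ) (x : ℕ → ℝ) : Prop :=
  -(1 / (x N - x (N - 1))) = deriv f (x N) / f (x N)

/-- Right boundary condition at a point (`none` denoting `+∞`). -/
def RightBCAt (f : ℝ → ℝ) (N : ℕ) (x : ℕ → ℝ) : Option ℝ → Prop
  | none => -(1 / (x N - x (N - 1))) = deriv f (x N) / f (x N)
  | some b => x N < b ∧
      1 / (b - x N) - 1 / (x N - x (N - 1)) = deriv f (x N) / f (x N)

/-- `r 1 < ⋯ < r l` enumerates the zeros of `f`. -/
def ZeroEnum (f : ℝ → ℝ) (l : ℕ) (r : ℕ → ℝ) : Prop :=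
  (∀ i j, 1 ≤ i → i < j → j ≤ l → r i < r j) ∧
  {y : ℝ | f y = 0} = r '' Set.Icc 1 l

/-- Membership in the region `R_k = (r_k, r_{k+1})`, with the conventions
`r_0 = -∞` and `r_{l+1} = +∞`. -/
def InRegion (l : ℕ) (r : ℕ → ℝ) (k : ℕ) (t : ℝ) : Prop :=
  (k = 0 ∨ r k < t) ∧ (k = l ∨ t < r (k + 1))

/-- The region `R_k` as a subset of `ℝ`. -/
def regionSet (l : ℕ) (r : ℕ → ℝ) (k : ℕ) : Set ℝ := {t | InRegion l r k t}

/-- The number of points of `(x n)_{n=1}^N` lying in region `R_k`. -/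
def regionCount (l : ℕ) (r : ℕ → ℝ) (N : ℕ) (x : ℕ → ℝ) (k : ℕ) : ℕ :=
  Set.ncard {n : ℕ | n ∈ Set.Icc 1 N ∧ InRegion l r k (x n)}

/-- `n(t) = max {0 ≤ k ≤ N : x_k ≤ t}` (convention `x_0 = -∞`); for an increasing
sequence this is the number of points among `x_1, …, x_N` that are `≤ t`. -/
def nIdx (N : ℕ) (x : ℕ → ℝ) (t : ℝ) : ℕ :=
  Set.ncard {n : ℕ | n ∈ Set.Icc 1 N ∧ x n ≤ t}

/-- `1/(x_{n+1}-x_n) - 1/(x_n-x_{n-1})`, with the conventions `x_0 = -∞`,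
`x_{N+1} = +∞` (so the corresponding reciprocals vanish). -/
def gapTerm (N : ℕ) (x : ℕ → ℝ) (n : ℕ) : ℝ :=
  (if n < N then 1 / (x (n + 1) - x n) else 0) -
    (if 1 < n then 1 / (x n - x (n - 1)) else 0)

/-- The MIW energy `H(x_1,…,x_N)`. -/
def Hfun (N : ℕ) (x : ℕ → ℝ) : ℝ :=
  ∑ n ∈ Finset.Icc 1 N, x n ^ 2 + ∑ n ∈ Finset.Icc 1 N, gapTerm N x n ^ 2

/-- Partial derivative `∂H/∂x_n` evaluated at the configuration `x`. -/
def partialH (N : ℕ) (x : ℕ → ℝ) (n : ℕ) : ℝ :=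
  deriv (fun s => Hfun N (Function.update x n s)) (x n)

/-- The empirical distribution `(1/N) ∑_{n=1}^N δ_{x_n}`. -/
def empDist (N : ℕ) (x : ℕ → ℝ) : Measure ℝ :=
  (N : ENNReal)⁻¹ • ∑ n ∈ Finset.Icc 1 N, Measure.dirac (x n)

/-- The probability measure on `S` with density proportional to `f`. -/
def densMeasure (f : ℝ → ℝ) (S : Set ℝ) : Measure ℝ :=
  (volume.restrict S).withDensity fun t => ENNReal.ofReal (f t / ∫ u in S, f u)

/-- The Stein solution `g_h(x) = (1/f(x)) ∫_a^x f(t)(h(t) - E_P[h]) dt`, where the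
integral runs over the part of `S` to the left of `x`. -/
def steinG (f : ℝ → ℝ) (S : Set ℝ) (h : ℝ → ℝ) (x : ℝ) : ℝ :=
  (1 / f x) * ∫ t in S ∩ Set.Iio x, f t * (h t - ∫ s, h s ∂(densMeasure f S))

/-- The intermediate density `ρ(t) = 1/((N-1)(x_{n(t)+1} - x_{n(t)}))` on `(x_1, x_N)`. -/
def interDens (N : ℕ) (x : ℕ → ℝ) (t : ℝ) : ℝ :=
  Set.indicator (Set.Ioo (x 1) (x N))
    (fun u => 1 / (((N : ℝ) - 1) * (x (nIdx N x u + 1) - x (nIdx N x u)))) t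

/-- The intermediate distribution `R` with density `ρ`. -/
def interDist (N : ℕ) (x : ℕ → ℝ) : Measure ℝ :=
  volume.withDensity fun t => ENNReal.ofReal (interDens N x t)

open Polynomial in
/-- The function `hermiteFun` agrees with evaluation of Mathlib's Hermite polynomial. -/
lemma hermiteFun_eq_aeval (l : ℕ) (x : ℝ) :
    hermiteFun l x = aeval x (hermite l) := by
  have h : (fun t : ℝ => Real.exp (-t ^ 2 / 2)) = fun t => Real.exp (-(t ^ 2 / 2)) := by
    funext t; rw [neg_div]
  rw [hermite_eq_deriv_gaussian', hermiteFun, iteratedDeriv_eq_iterate, h]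
  ring

open Polynomial in
lemma derivative_hermite_succ (n : ℕ) :
    derivative (hermite (n + 1)) = (n + 1 : ℤ[X]) * hermite n := by
  induction n with
  | zero => simp
  | succ n ih =>
    have h2 : derivative (derivative (hermite (n + 1)))
        = (n + 1 : ℤ[X]) * derivative (hermite n) := by
      rw [ih]; simp
    rw [hermite_succ (n + 1), derivative_sub, derivative_mul, derivative_X, h2, ih]
    have h3 := hermite_succ n
    push_cast
    linear_combination (-(n : ℤ[X]) - 1) * h3

open Polynomial in
lemma hermite_comp_neg_X (n : ℕ) : (hermite n).comp (-X) = (-1) ^ n * hermite n := by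
  induction n with
  | zero => simp
  | succ n ih =>
    have h : derivative ((hermite n).comp (-X)) = (-1) ^ n * derivative (hermite n) := by
      rw [ih, show ((-1 : ℤ[X]) ^ n) = C ((-1) ^ n) by simp, derivative_C_mul]
    rw [derivative_comp] at h
    simp only [derivative_neg, derivative_X] at h
    rw [hermite_succ, sub_comp, mul_comp, X_comp, ih, pow_succ]
    linear_combination h

lemma hermiteFun_neg (l : ℕ) (x : ℝ) : hermiteFun l (-x) = (-1) ^ l * hermiteFun l x := by
  have h := congrArg (Polynomial.aeval x) (hermite_comp_neg_X l)
  rw [Polynomial.aeval_comp] at h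
  simpa [hermiteFun_eq_aeval] using h

lemma hasDerivAt_hermiteFun_succ (m : ℕ) (x : ℝ) :
    HasDerivAt (hermiteFun (m + 1)) ((m + 1) * hermiteFun m x) x := by
  have h := (Polynomial.hermite (m + 1)).hasDerivAt_aeval x
  rw [derivative_hermite_succ] at h
  have e : hermiteFun (m + 1) = fun y => Polynomial.aeval y (Polynomial.hermite (m + 1)) :=
    funext (hermiteFun_eq_aeval _)
  rw [e, hermiteFun_eq_aeval]
  simpa using h

lemma hasDerivAt_gaussian (x : ℝ) :
    HasDerivAt (fun t : ℝ => Real.exp (-t ^ 2 / 2)) (-x * Real.exp (-x ^ 2 / 2)) x := by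
  have h0 : HasDerivAt (fun t : ℝ => -t ^ 2 / 2) (-x) x := by
    refine ((hasDerivAt_pow 2 x).neg.div_const 2).congr_deriv ?_
    norm_num
    ring
  exact h0.exp.congr_deriv (mul_comm _ _)

/-- The Hermite function identity `(p_m e^{-x²/2})' = -p_{m+1} e^{-x²/2}`. -/
lemma hasDerivAt_hermiteFun_mul_gaussian (m : ℕ) (x : ℝ) :
    HasDerivAt (fun t => hermiteFun m t * Real.exp (-t ^ 2 / 2))
      (-(hermiteFun (m + 1) x * Real.exp (-x ^ 2 / 2))) x := by
  have h := ((Polynomial.hermite m).hasDerivAt_aeval x).mul (hasDerivAt_gaussian x)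
  have e : hermiteFun m = fun y => Polynomial.aeval y (Polynomial.hermite m) :=
    funext (hermiteFun_eq_aeval _)
  rw [e, hermiteFun_eq_aeval, Polynomial.hermite_succ]
  refine h.congr_deriv ?_
  simp only [map_sub, map_mul, Polynomial.aeval_X]
  ring

lemma tendsto_hermiteFun_mul_gaussian (m : ℕ) :
    Tendsto (fun t => hermiteFun m t * Real.exp (-t ^ 2 / 2)) atTop (nhds 0) := by
  have h := ((Polynomial.hermite m).map (Int.castRingHom ℝ)).tendsto_div_exp_atTop
  refine squeeze_zero_norm' ?_ (by simpa using h.abs)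
  filter_upwards [eventually_ge_atTop (2 : ℝ)] with t ht
  have e : hermiteFun m t = ((Polynomial.hermite m).map (Int.castRingHom ℝ)).eval t := by
    rw [hermiteFun_eq_aeval, Polynomial.aeval_def, Polynomial.eval_map]; rfl
  rw [e, Real.norm_eq_abs, div_eq_mul_inv _ (Real.exp t), ← Real.exp_neg t, abs_mul, abs_mul,
    abs_of_pos (Real.exp_pos _), abs_of_pos (Real.exp_pos _)]
  gcongr
  nlinarith

/-- To the right of all zeros of `p_{m+1}`, the polynomials `p_m` and `p_{m+1}` do not have
opposite signs: `p_m e^{-x²/2}` vanishes at infinity and is monotone there, because its derivative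
`-p_{m+1} e^{-x²/2}` has constant sign. -/
lemma hermiteFun_mul_nonneg (m : ℕ) (u : ℝ) (h : ∀ t, u < t → hermiteFun (m + 1) t ≠ 0)
    (x : ℝ) (hx : u < x) : 0 ≤ hermiteFun m x * hermiteFun (m + 1) x := by
  have hcont : Continuous (hermiteFun (m + 1)) :=
    continuous_iff_continuousAt.2 fun t => (hasDerivAt_hermiteFun_succ m t).continuousAt
  have hgc : ContinuousOn (fun t => hermiteFun m t * Real.exp (-t ^ 2 / 2)) (Ici x) :=
    fun t _ => (hasDerivAt_hermiteFun_mul_gaussian m t).continuousAt.continuousWithinAt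
  have hlim := tendsto_hermiteFun_mul_gaussian m
  have hconn : ∀ t ∈ Ici x, 0 < hermiteFun (m + 1) x * hermiteFun (m + 1) t := by
    intro t ht
    by_contra hneg
    push Not at hneg
    have h0 : (0 : ℝ) ∈ (fun s => hermiteFun (m + 1) x * hermiteFun (m + 1) s) '' Icc x t :=
      intermediate_value_Icc' (mem_Ici.1 ht) (by fun_prop) ⟨hneg, mul_self_nonneg _⟩
    obtain ⟨s, hs, hs0⟩ := h0
    rcases mul_eq_zero.1 hs0 with h1 | h1
    · exact h x hx h1
    · exact h s (hx.trans_le hs.1) h1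
  rcases lt_or_gt_of_ne (h x hx) with hneg | hpos
  · have hm : MonotoneOn (fun t => hermiteFun m t * Real.exp (-t ^ 2 / 2)) (Ici x) := by
      refine monotoneOn_of_deriv_nonneg (convex_Ici x) hgc
        (fun t _ => (hasDerivAt_hermiteFun_mul_gaussian m t).differentiableAt.differentiableWithinAt)
        fun t ht => ?_
      rw [(hasDerivAt_hermiteFun_mul_gaussian m t).deriv]
      have := hconn t (interior_subset ht)
      have := neg_of_mul_pos_right this hneg.le
      have := mul_neg_of_neg_of_pos this (Real.exp_pos (-t ^ 2 / 2))
      linarith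
    have h1 : hermiteFun m x * Real.exp (-x ^ 2 / 2) ≤ 0 :=
      ge_of_tendsto hlim ((eventually_ge_atTop x).mono fun t ht => hm self_mem_Ici ht ht)
    exact mul_nonneg_of_nonpos_of_nonpos
      (nonpos_of_mul_nonpos_left h1 (Real.exp_pos _)) hneg.le
  · have hm : AntitoneOn (fun t => hermiteFun m t * Real.exp (-t ^ 2 / 2)) (Ici x) := by
      refine antitoneOn_of_deriv_nonpos (convex_Ici x) hgc
        (fun t _ => (hasDerivAt_hermiteFun_mul_gaussian m t).differentiableAt.differentiableWithinAt)
        fun t ht => ?_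
      rw [(hasDerivAt_hermiteFun_mul_gaussian m t).deriv]
      have := hconn t (interior_subset ht)
      have := (mul_pos_iff_of_pos_left hpos).1 this
      have := mul_pos this (Real.exp_pos (-t ^ 2 / 2))
      linarith
    have h1 : 0 ≤ hermiteFun m x * Real.exp (-x ^ 2 / 2) :=
      le_of_tendsto hlim ((eventually_ge_atTop x).mono fun t ht => hm self_mem_Ici ht ht)
    exact mul_nonneg (nonneg_of_mul_nonneg_left h1 (Real.exp_pos _)) hpos.le

lemma heFun_eq_zero_iff {l : ℕ} {c : ℝ} (hc : 0 < c) (t : ℝ) :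
    heFun l c t = 0 ↔ hermiteFun l t = 0 := by
  simp [heFun, hc.ne', (Real.exp_pos _).ne']

/-- The score bound `-f'/f = x - 2 p'/p ≤ x`, valid wherever `p` and `p'` do not have opposite
signs. -/
lemma neg_score_le {l : ℕ} {c x d : ℝ} (hc : 0 < c) (hd : HasDerivAt (hermiteFun l) d x)
    (h0 : hermiteFun l x ≠ 0) (hs : 0 ≤ d * hermiteFun l x) :
    -(deriv (heFun l c) x / heFun l c x) ≤ x := by
  have h : HasDerivAt (heFun l c) _ x := ((hd.pow 2).const_mul c).mul (hasDerivAt_gaussian x)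
  rw [h.deriv, heFun]
  have hE := Real.exp_pos (-x ^ 2 / 2)
  have hp : 0 < hermiteFun l x ^ 2 := by positivity
  rw [← neg_div, div_le_iff₀ (by positivity)]
  have : 0 ≤ c * (d * hermiteFun l x) * Real.exp (-x ^ 2 / 2) := by positivity
  simp
  nlinarith

/-- A zero to the right of which there is no other is nonnegative, since the zeros of `p_l` are
symmetric about the origin. -/
lemma largest_zero_nonneg {l : ℕ} {u : ℝ} (h0 : hermiteFun l u = 0)
    (h : ∀ t, u < t → hermiteFun l t ≠ 0) : 0 ≤ u := by
  by_contra hu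
  push Not at hu
  exact h (-u) (by linarith) (by rw [hermiteFun_neg, h0, mul_zero])

theorem MIW_tail_xN_lower_bound (l : ℕ) (c : ℝ) (hc : IsNormalizing l c)
    (u : ℝ)
    (hu : (l = 0 ∧ u = 0) ∨
      (1 ≤ l ∧ heFun l c u = 0 ∧ ∀ t, u < t → heFun l c t ≠ 0))
    (N : ℕ) (hN : 2 ≤ N) (x : ℕ → ℝ)
    (hmono : ∀ n, 1 ≤ n → n < N → x n < x (n + 1))
    (hgt : ∀ n, 1 ≤ n → n ≤ N → u < x n)
    (hrel : ∀ n, 1 ≤ n → n < N →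
      1 / (x (n + 1) - x n)
        = ∑ k ∈ Finset.Icc (n + 1) N, -(deriv (heFun l c) (x k) / heFun l c (x k))) :
    Real.log N ≤ ∑ k ∈ Finset.Icc 1 (N - 1), (1 : ℝ) / k ∧
    (∑ k ∈ Finset.Icc 1 (N - 1), (1 : ℝ) / k) ≤ x N ^ 2 ∧
    Real.sqrt (Real.log N) ≤ x N := by
  have hu0 : 0 ≤ u := by
    rcases hu with ⟨-, rfl⟩ | ⟨-, h0, h⟩
    · exact le_rfl
    · simp only [heFun_eq_zero_iff hc.1, ne_eq] at h0 h
      exact largest_zero_nonneg h0 h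
  have hscore : ∀ t, u < t → -(deriv (heFun l c) t / heFun l c t) ≤ t := by
    intro t ht
    rcases hu with ⟨rfl, -⟩ | ⟨hl, -, h⟩
    · have e : hermiteFun 0 = fun _ => (1 : ℝ) := by
        funext y; simp [hermiteFun_eq_aeval]
      exact neg_score_le hc.1 (d := 0) (by rw [e]; exact hasDerivAt_const t 1) (by simp [e])
        (by simp)
    · obtain ⟨m, rfl⟩ := Nat.exists_eq_succ_of_ne_zero (Nat.one_le_iff_ne_zero.1 hl)
      simp only [ne_eq, heFun_eq_zero_iff hc.1] at h
      refine neg_score_le hc.1 (hasDerivAt_hermiteFun_succ m t) (h t ht) ?_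
      have := hermiteFun_mul_nonneg m u h t ht
      rw [mul_assoc]
      positivity
  have hle : ∀ k, 1 ≤ k → k ≤ N → x k ≤ x N := by
    intro k hk hkN
    have hstep : ∀ n, k ≤ n → n ≤ N → x k ≤ x n := by
      intro n hn
      induction n, hn using Nat.le_induction with
      | base => exact fun _ => le_rfl
      | succ n hn ih => exact fun h => (ih (by omega)).trans (hmono n (by omega) (by omega)).le
    exact hstep N hkN le_rfl
  have hxN : 0 < x N := hu0.trans_lt (hgt N (by omega) le_rfl)
  -- Summing the gaps from the right end: the `j`-th gap from the right is at least `1 / (j x_N)`.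
  have hsum : ∀ j, j ≤ N - 1 →
      ∑ k ∈ Finset.Icc 1 j, (1 : ℝ) / k ≤ x N * (x N - x (N - j)) := by
    intro j
    induction j with
    | zero => simp
    | succ j ih =>
      intro hj
      obtain ⟨n, hn⟩ : ∃ n, N - (j + 1) = n := ⟨_, rfl⟩
      have hn' : N - j = n + 1 := by omega
      have ih := ih (by omega)
      have hgap := hmono n (by omega) (by omega)
      have hb : 1 / (x (n + 1) - x n) ≤ ((j : ℝ) + 1) * x N := by
        rw [hrel n (by omega) (by omega)]
        refine (Finset.sum_le_card_nsmul _ _ (x N) fun k hk => ?_).trans_eq ?_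
        · rw [Finset.mem_Icc] at hk
          exact (hscore _ (hgt k (by omega) hk.2)).trans (hle k (by omega) hk.2)
        · rw [Nat.card_Icc, show N + 1 - (n + 1) = j + 1 by omega, nsmul_eq_mul]
          push_cast; rfl
      rw [Finset.sum_Icc_succ_top (by omega), hn]
      rw [hn'] at ih
      have h1 : 1 / ((j + 1 : ℕ) : ℝ) ≤ x N * (x (n + 1) - x n) := by
        rw [div_le_iff₀ (sub_pos.2 hgap)] at hb
        rw [div_le_iff₀ (by positivity)]
        push_cast
        linarith
      linarith
  have hharm : Real.log N ≤ ∑ k ∈ Finset.Icc 1 (N - 1), (1 : ℝ) / k := by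
    have h := log_add_one_le_harmonic (N - 1)
    rw [Nat.sub_add_cancel (by omega : 1 ≤ N), harmonic_eq_sum_Icc] at h
    push_cast at h
    simpa only [one_div] using h
  have hsq : ∑ k ∈ Finset.Icc 1 (N - 1), (1 : ℝ) / k ≤ x N ^ 2 := by
    have h := hsum (N - 1) le_rfl
    rw [show N - (N - 1) = 1 by omega] at h
    have h1 : 0 < x 1 := hu0.trans_lt (hgt 1 le_rfl (by omega))
    nlinarith [mul_pos hxN h1]
  exact ⟨hharm, hsq, (Real.sqrt_le_left hxN.le).2 (hharm.trans hsq)⟩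
end
end

section
/- Let f be the higher energy function of order ℓ ≥ 0 and, for each N, let (x_n^{(N)})_{n=1}^N be the unique MIW sequence of f satisfying the left boundary condition at −∞ and the right boundary condition at +∞ with N_k(N) ≥ 1 points in each region R_k, where N_k(N) → ∞ as N → ∞ for every 0 ≤ k ≤ ℓ. Then there is a constant C such that x_N^{(N)} ≤ C√(log N) and |x_1^{(N)}| ≤ C√(log N) for all sufficiently large N. -/
/-!
Put `s_n = 1 / (x_{n+1} - x_n)` and `g = f' / f`, so that the recursion reads `s_n - s_{n-1} = g (x_n)`.
Since `f = c p² e^{-x²/2}` with `p` a nonzero polynomial, `g x = 2 p' x / p x - x` and `p' / p → 0`,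
so `g x ≤ -x / 2` once `x ≥ M` (`eventually_logDeriv_le`). The boundary condition at `-∞` gives
`g (x_1) = s_1 > 0`, hence `x_1 < M`.

If `X = x_N ≥ 2 M`, then going down from `x_N` every point that is still `≥ X / 2` increases
`s` by at least `X / 4`; hence the `j`-th gap from the right is at most `4 / (j X)`, and the first
point below `X / 2`, which exists because `x_1 < M`, forces `X / 2 ≤ (4 / X) H_N`, where `H_N` is
the harmonic number. Thus `X² ≤ 8 (1 + log N)` (`last_le_sqrt_log`).
The bound on `x_1` is the same statement for the reflected sequence `n ↦ -x_{N+1-n}`.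
-/


open MeasureTheory Filter Set

noncomputable section

open Polynomial in
theorem eventually_logDeriv_le (p : ℝ[X]) (hp : p ≠ 0) (c : ℝ) (hc : 0 < c) :
    ∀ᶠ x : ℝ in atTop,
      deriv (fun t => c * p.eval t ^ 2 * Real.exp (-t ^ 2 / 2)) x /
        (c * p.eval x ^ 2 * Real.exp (-x ^ 2 / 2)) ≤ -x / 2 := by
  have h1 : Tendsto (fun x => p.derivative.eval x / p.eval x) atTop (nhds 0) :=
    Polynomial.div_tendsto_atTop_zero_of_degree_lt _ _ (degree_derivative_lt hp)
  have h2 : ∀ᶠ x : ℝ in atTop, ¬ p.IsRoot x := Polynomial.eventually_atTop_not_isRoot p hp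
  filter_upwards [h1.eventually (gt_mem_nhds (show (0 : ℝ) < 1 / 4 by norm_num)), h2,
    eventually_ge_atTop 1] with x hx1 hx2 hx3
  have hpx : p.eval x ≠ 0 := hx2
  have hexp : HasDerivAt (fun t : ℝ => Real.exp (-t ^ 2 / 2)) (Real.exp (-x ^ 2 / 2) * (-x)) x := by
    have h := (((hasDerivAt_pow 2 x).neg.div_const 2)).exp
    refine h.congr_deriv ?_
    simp
    ring
  have hd := (((p.hasDerivAt x).pow 2).const_mul c).mul hexp
  have hd' : deriv (fun t => c * p.eval t ^ 2 * Real.exp (-t ^ 2 / 2)) x = _ := hd.deriv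
  rw [hd']
  have he := Real.exp_ne_zero (-x ^ 2 / 2)
  have : (c * (((2 : ℕ) : ℝ) * p.eval x ^ (2 - 1) * p.derivative.eval x) * Real.exp (-x ^ 2 / 2) +
      c * p.eval x ^ 2 * (Real.exp (-x ^ 2 / 2) * -x)) / (c * p.eval x ^ 2 * Real.exp (-x ^ 2 / 2))
      = 2 * (p.derivative.eval x / p.eval x) - x := by
    have := hc.ne'
    field_simp
    push_cast
    ring
  have h3 := this.le
  refine le_trans h3 ?_
  linarith

theorem hermiteFun_eq_eval (l : ℕ) (x : ℝ) :
    hermiteFun l x = ((Polynomial.hermite l).map (Int.castRingHom ℝ)).eval x := by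
  have h := Polynomial.hermite_eq_deriv_gaussian l x
  rw [Polynomial.aeval_def, Polynomial.eval₂_eq_eval_map] at h
  rw [show Int.castRingHom ℝ = algebraMap ℤ ℝ from rfl, h, hermiteFun, iteratedDeriv_eq_iterate]
  have : (fun t : ℝ => Real.exp (-t ^ 2 / 2)) = fun y => Real.exp (-(y ^ 2 / 2)) := by
    funext t
    rw [neg_div]
  rw [this, Real.exp_neg (x ^ 2 / 2), div_inv_eq_mul]
  ring

/-- The upper bound for the last point, for any drift `g` that is at most `-x / 2` far to the
right. The boundary condition at `-∞` enters only through `y 1 < M`. -/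
theorem last_le_sqrt_log (g : ℝ → ℝ) (M : ℝ) (hM : 0 < M) (hg : ∀ x, M ≤ x → g x ≤ -x / 2)
    (N : ℕ) (hN : 3 ≤ N) (y : ℕ → ℝ)
    (hrec : ∀ n, 1 < n → n < N → 1 / (y (n + 1) - y n) - 1 / (y n - y (n - 1)) = g (y n))
    (hmono : ∀ n, 1 ≤ n → n < N → y n < y (n + 1))
    (hR : -(1 / (y N - y (N - 1))) = g (y N)) (h1 : y 1 < M) :
    y N ≤ (2 * M + 4) * Real.sqrt (Real.log N) := by
  have hlog : 1 ≤ Real.log N := by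
    rw [Real.le_log_iff_exp_le (by positivity)]
    have h3 : (3 : ℝ) ≤ N := by exact_mod_cast hN
    linarith [Real.exp_one_lt_d9]
  have hsq : 1 ≤ Real.sqrt (Real.log N) := Real.one_le_sqrt.2 hlog
  rcases le_or_gt (y N) (2 * M) with hX | hX
  · nlinarith
  set X := y N with hXdef
  have hX0 : 0 < X := by linarith
  -- Descending from the right, the reciprocal gaps grow at least linearly.
  have key : ∀ j, j + 2 ≤ N → (∀ i ≤ j, X / 2 ≤ y (N - i)) →
      (j + 1 : ℝ) * X / 4 ≤ 1 / (y (N - j) - y (N - j - 1)) := by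
    intro j
    induction j with
    | zero =>
      intro _ _
      have := hg X (by linarith)
      simp only [Nat.sub_zero, Nat.cast_zero]
      rw [← hXdef]
      linarith
    | succ j ih =>
      intro hj hi
      have h := ih (by omega) (fun i hij => hi i (by omega))
      have hr := hrec (N - (j + 1)) (by omega) (by omega)
      rw [show N - (j + 1) + 1 = N - j by omega] at hr
      rw [show N - j - 1 = N - (j + 1) by omega] at h
      have hy := hi (j + 1) le_rfl
      have := hg (y (N - (j + 1))) (by linarith)
      push_cast
      linarith
  have key2 : ∀ j, j + 1 ≤ N → (∀ i < j, X / 2 ≤ y (N - i)) →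
      X - 4 / X * (harmonic j : ℝ) ≤ y (N - j) := by
    intro j
    induction j with
    | zero => intro _ _; simp [hXdef]
    | succ j ih =>
      intro hj hi
      have h := ih (by omega) (fun i hij => hi i (by omega))
      have hk := key j (by omega) (fun i hij => hi i (by omega))
      have hm := hmono (N - j - 1) (by omega) (by omega)
      rw [show N - j - 1 + 1 = N - j by omega] at hm
      have hpos : (0 : ℝ) < (j + 1 : ℝ) * X / 4 := by positivity
      have hgap := one_div_le_one_div_of_le hpos hk
      rw [one_div_one_div] at hgap
      rw [harmonic_succ, show N - (j + 1) = N - j - 1 by omega]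
      push_cast
      have : 1 / ((j + 1 : ℝ) * X / 4) = 4 / X * (j + 1 : ℝ)⁻¹ := by field_simp
      rw [this] at hgap
      linarith
  have hex : ∃ j, y (N - j) < X / 2 := ⟨N - 1, by
    rw [show N - (N - 1) = 1 by omega]; linarith⟩
  classical
  have hlt := Nat.find_spec hex
  have hjN : Nat.find hex ≤ N - 1 := Nat.find_min' hex (by
    rw [show N - (N - 1) = 1 by omega]; linarith)
  have hmin : ∀ i < Nat.find hex, X / 2 ≤ y (N - i) :=
    fun i hi => not_lt.1 (Nat.find_min hex hi)
  have hj0 : Nat.find hex ≠ 0 := by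
    intro h0
    rw [h0, Nat.sub_zero, ← hXdef] at hlt
    linarith
  set j := Nat.find hex with hj
  have h2 := key2 j (by omega) hmin
  have hH := harmonic_le_one_add_log j
  have hl : Real.log j ≤ Real.log N :=
    Real.log_le_log (by exact_mod_cast Nat.pos_of_ne_zero hj0) (by exact_mod_cast (by omega))
  have hle : X / 2 ≤ 4 / X * (2 * Real.log N) := by
    have : 4 / X * (harmonic j : ℝ) ≤ 4 / X * (2 * Real.log N) := by
      apply mul_le_mul_of_nonneg_left _ (by positivity)
      linarith
    linarith
  have hX2 : X ^ 2 ≤ 4 ^ 2 * Real.log N := by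
    rw [div_mul_eq_mul_div, le_div_iff₀ hX0] at hle
    nlinarith
  have hfin : X ≤ 4 * Real.sqrt (Real.log N) := by
    refine (pow_le_pow_iff_left₀ hX0.le (by positivity) two_ne_zero).1 ?_
    rw [mul_pow, Real.sq_sqrt (by linarith)]
    exact hX2
  nlinarith

theorem MIW_extremes_sqrt_log_upper (l : ℕ) (c : ℝ) (hc : IsNormalizing l c)
    (r : ℕ → ℝ) (hr : ZeroEnum (heFun l c) l r)
    (Nk : ℕ → ℕ → ℕ) (x : ℕ → ℕ → ℝ)
    (hx : ∀ᶠ N in atTop,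
      IsMIW (heFun l c) N (x N) ∧ LeftBC (heFun l c) (x N) ∧
      RightBC (heFun l c) N (x N) ∧
      ∀ k ≤ l, 1 ≤ Nk N k ∧ regionCount l r N (x N) k = Nk N k)
    (hNk : ∀ k ≤ l, Tendsto (fun N => Nk N k) atTop atTop) :
    ∃ C : ℝ, ∀ᶠ N in atTop,
      x N N ≤ C * Real.sqrt (Real.log N) ∧
      |x N 1| ≤ C * Real.sqrt (Real.log N) := by
  obtain ⟨hc0, -⟩ := hc
  set p : Polynomial ℝ := (Polynomial.hermite l).map (Int.castRingHom ℝ) with hpdef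
  have hp : p ≠ 0 := ((Polynomial.hermite_monic l).map _).ne_zero
  have hf : heFun l c = fun t => c * p.eval t ^ 2 * Real.exp (-t ^ 2 / 2) := by
    funext t
    rw [heFun, hermiteFun_eq_eval]
  have hq : p.comp (-Polynomial.X) ≠ 0 := by
    intro h
    apply hp
    have := congrArg (fun q => Polynomial.comp q (-Polynomial.X)) h
    simpa [Polynomial.comp_assoc] using this
  have hf' : (fun t => c * (p.comp (-Polynomial.X)).eval t ^ 2 * Real.exp (-t ^ 2 / 2)) =
      fun t => heFun l c (-t) := by
    funext t
    simp [hf]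
  have e1 := eventually_logDeriv_le p hp c hc0
  rw [← hf] at e1
  have e2 := eventually_logDeriv_le _ hq c hc0
  rw [hf'] at e2
  obtain ⟨M, hM⟩ := eventually_atTop.1 ((e1.and e2).and (eventually_ge_atTop 1))
  have hM0 : 0 < M := lt_of_lt_of_le one_pos (hM M le_rfl).2
  let g : ℝ → ℝ := fun t => deriv (heFun l c) t / heFun l c t
  have hg1 : ∀ t, M ≤ t → g t ≤ -t / 2 := by
    intro t ht
    have h := (hM t ht).1.1
    rw [← congrFun hf t] at h
    exact h
  have hg2 : ∀ t, M ≤ t → -g (-t) ≤ -t / 2 := by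
    intro t ht
    have h := (hM t ht).1.2
    rw [congrFun hf' t, deriv_comp_neg, neg_div] at h
    exact h
  refine ⟨2 * M + 4, ?_⟩
  filter_upwards [hx, eventually_ge_atTop 3] with N hxN hN
  obtain ⟨⟨hmono, -, hrec⟩, hL, hR, -⟩ := hxN
  have hrec' : ∀ n, 1 < n → n < N →
      1 / (x N (n + 1) - x N n) - 1 / (x N n - x N (n - 1)) = g (x N n) := hrec
  have hL' : 1 / (x N 2 - x N 1) = g (x N 1) := hL
  have hR' : -(1 / (x N N - x N (N - 1))) = g (x N N) := hR
  have h12 : 0 < g (x N 1) := by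
    have := hmono 1 le_rfl (by omega)
    rw [← hL']
    exact one_div_pos.2 (by linarith)
  have hNN : g (x N N) < 0 := by
    have := hmono (N - 1) (by omega) (by omega)
    rw [show N - 1 + 1 = N by omega] at this
    rw [← hR']
    exact neg_neg_of_pos (one_div_pos.2 (by linarith))
  have h1M : x N 1 < M := by
    by_contra! h
    linarith [hg1 _ h]
  have hNM : -x N N < M := by
    by_contra! h
    have := hg2 _ h
    rw [neg_neg] at this
    linarith
  have hu := last_le_sqrt_log g M hM0 hg1 N hN (x N) hrec' hmono hR' h1M
  have hv := last_le_sqrt_log (fun t => -g (-t)) M hM0 hg2 N hN (fun n => -x N (N + 1 - n))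
    (by
      intro n hn hn'
      have := hrec' (N + 1 - n) (by omega) (by omega)
      simp only [neg_neg]
      rw [show N + 1 - (n + 1) = N + 1 - n - 1 by omega,
        show N + 1 - (n - 1) = N + 1 - n + 1 by omega]
      rw [← this]
      ring)
    (by
      intro n hn hn'
      have := hmono (N + 1 - (n + 1)) (by omega) (by omega)
      rw [show N + 1 - (n + 1) + 1 = N + 1 - n by omega] at this
      simpa using this)
    (by
      simp only [neg_neg]
      rw [show N + 1 - N = 1 by omega, show N + 1 - (N - 1) = 2 by omega, ← hL']
      ring)
    (by simpa using hNM)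
  simp only [show N + 1 - N = 1 by omega] at hv
  refine ⟨hu, abs_le.2 ⟨by linarith, ?_⟩⟩
  have h1N : ∀ n, 1 ≤ n → n ≤ N → x N 1 ≤ x N n := by
    intro n hn
    induction n, hn using Nat.le_induction with
    | base => intro _; exact le_rfl
    | succ n hn ih => intro h; exact (ih (by omega)).trans (hmono n hn (by omega)).le
  exact (h1N N (by omega) le_rfl).trans hu
end
end

section
/- Let N ≥ 2 and let x_1 < x_2 < ⋯ < x_N be strictly increasing real numbers. Let Q = (1/N) Σ_{n=1}^N δ_{x_n} be the empirical distribution, and let R be the probability distribution on (x_1, x_N) with density ρ(t) = 1/((N−1)(x_{n(t)+1} − x_{n(t)})), where n(t) = max{1 ≤ k ≤ N : x_k ≤ t}. Then sup_h |E_R[h] − E_Q[h]| ≤ (x_N − x_1)/(N−1), where the supremum is over all 1-Lipschitz functions h : ℝ → ℝ. -/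
/-!
Write `M = N - 1`. The distribution `R` puts mass `1 / M` on each gap `[x_n, x_{n+1}]`,
`1 ≤ n < N`, spread uniformly over it. The empirical distribution `Q` can also be cut into `M`
pieces of mass `1 / M`, the `n`-th one living on the two endpoints of the `n`-th gap: give weight
`(N - n) / N` to `x_n` and `n / N` to `x_{n+1}`. A point `x_n` then receives in total
`(1 / M) ((N - n) / N + (n - 1) / N) = 1 / N` (`sum_endpoint_weights`). Coupling the pieces gap by
gap, mass `1 / M` moves by at most `x_{n+1} - x_n` in the `n`-th gap, so a `1`-Lipschitz `h` has
integrals differing by at most `(1 / M) ∑ (x_{n+1} - x_n) = (x_N - x_1) / M`.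

`integral_interDist` describes `R` through its gaps, and `gap_bound` is the estimate on one gap.
-/

open MeasureTheory Filter Set

noncomputable section

lemma points_le {N : ℕ} {x : ℕ → ℝ} (hmono : ∀ n, 1 ≤ n → n < N → x n < x (n + 1))
    {i j : ℕ} (hi : 1 ≤ i) (hij : i ≤ j) (hj : j ≤ N) : x i ≤ x j := by
  induction j, hij using Nat.le_induction with
  | base => exact le_rfl
  | succ k hk ih => exact (ih (by omega)).trans (hmono k (by omega) (by omega)).le

lemma nIdx_eq {N : ℕ} {x : ℕ → ℝ} (hmono : ∀ n, 1 ≤ n → n < N → x n < x (n + 1))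
    {n : ℕ} (h1 : 1 ≤ n) (hn : n < N) {t : ℝ} (ht : t ∈ Ioo (x n) (x (n + 1))) :
    nIdx N x t = n := by
  have : {k : ℕ | k ∈ Set.Icc 1 N ∧ x k ≤ t} = (Finset.Icc 1 n : Finset ℕ) := by
    ext k
    simp only [Set.mem_ofPred_eq, Set.mem_Icc, Finset.coe_Icc]
    constructor
    · rintro ⟨⟨hk1, hkN⟩, hkt⟩
      refine ⟨hk1, ?_⟩
      by_contra! hlt
      have := points_le hmono (by omega : 1 ≤ n + 1) hlt hkN
      linarith [ht.2]
    · rintro ⟨hk1, hkn⟩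
      exact ⟨⟨hk1, by omega⟩, (points_le hmono hk1 hkn hn.le).trans ht.1.le⟩
  rw [nIdx, this, Set.ncard_coe_finset, Nat.card_Icc]
  omega

lemma nIdx_mono (N : ℕ) (x : ℕ → ℝ) : Monotone (nIdx N x) := by
  intro s t hst
  refine Set.ncard_le_ncard (fun k hk => ⟨hk.1, hk.2.trans hst⟩) ?_
  exact (Set.finite_Icc 1 N).subset fun k hk => hk.1

lemma interDens_measurable (N : ℕ) (x : ℕ → ℝ) : Measurable (interDens N x) := by
  have h1 : Measurable (nIdx N x) := (nIdx_mono N x).measurable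
  have h2 : Measurable (fun n : ℕ => 1 / (((N : ℝ) - 1) * (x (n + 1) - x n))) :=
    measurable_from_nat
  exact (h2.comp h1).indicator measurableSet_Ioo

lemma interDens_eq {N : ℕ} {x : ℕ → ℝ} (hmono : ∀ n, 1 ≤ n → n < N → x n < x (n + 1))
    {n : ℕ} (h1 : 1 ≤ n) (hn : n < N) {t : ℝ} (ht : t ∈ Ioo (x n) (x (n + 1))) :
    interDens N x t = 1 / (((N : ℝ) - 1) * (x (n + 1) - x n)) := by
  have hmem : t ∈ Ioo (x 1) (x N) :=
    ⟨(points_le hmono le_rfl h1 hn.le).trans_lt ht.1,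
      ht.2.trans_le (points_le hmono (by omega) hn le_rfl)⟩
  rw [interDens, Set.indicator_of_mem hmem, nIdx_eq hmono h1 hn ht]

/-- `R` is uniform with mass `1 / (N - 1)` on each gap. The density takes its expected value only on
the open gaps, so the pieces are compared up to the null set of endpoints. -/
lemma integral_interDist {N : ℕ} (hN : 2 ≤ N) {x : ℕ → ℝ}
    (hmono : ∀ n, 1 ≤ n → n < N → x n < x (n + 1)) {h : ℝ → ℝ} (hh : Continuous h) :
    ∫ t, h t ∂(interDist N x) = ∑ n ∈ Finset.Ico 1 N,
      1 / (((N : ℝ) - 1) * (x (n + 1) - x n)) * ∫ t in x n..x (n + 1), h t := by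
  have hN' : (0 : ℝ) < (N : ℝ) - 1 := by
    have : (2 : ℝ) ≤ N := by exact_mod_cast hN
    linarith
  set F : ℝ → ℝ := fun t => (ENNReal.ofReal (interDens N x t)).toReal • h t with hF
  have hFeq : ∀ n, 1 ≤ n → n < N → ∀ t ∈ Ioo (x n) (x (n + 1)),
      F t = 1 / (((N : ℝ) - 1) * (x (n + 1) - x n)) * h t := by
    intro n h1 hn t ht
    have hgap := sub_pos.2 (hmono n h1 hn)
    simp only [hF]
    rw [interDens_eq hmono h1 hn ht, ENNReal.toReal_ofReal (by positivity), smul_eq_mul]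
  have hint : ∀ n ∈ Set.Ico 1 N, IntervalIntegrable F volume (x n) (x (n + 1)) := by
    intro n hn
    refine IntervalIntegrable.congr_uIoo (f := fun t =>
      1 / (((N : ℝ) - 1) * (x (n + 1) - x n)) * h t)
      ((continuous_const.mul hh).intervalIntegrable _ _) (fun t ht => ?_)
    rw [uIoo_of_le (hmono n hn.1 hn.2).le] at ht
    exact (hFeq n hn.1 hn.2 t ht).symm
  rw [interDist, integral_withDensity_eq_integral_toReal_smul
    (interDens_measurable N x).ennreal_ofReal (by simp)]
  -- The density vanishes off the open interval, so the integral over `ℝ` splits at the points `x_n`.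
  have hzero : ∀ t, t ∉ Ioc (x 1) (x N) → F t = 0 := by
    intro t ht
    have : t ∉ Ioo (x 1) (x N) := fun h' => ht ⟨h'.1, h'.2.le⟩
    simp [hF, interDens, Set.indicator_of_notMem this]
  rw [← setIntegral_eq_integral_of_forall_compl_eq_zero hzero,
    ← intervalIntegral.integral_of_le (points_le hmono le_rfl (by omega) le_rfl),
    ← intervalIntegral.sum_integral_adjacent_intervals_Ico (by omega : 1 ≤ N) hint]
  refine Finset.sum_congr rfl fun n hn => ?_
  rw [Finset.mem_Ico] at hn
  rw [← intervalIntegral.integral_const_mul]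
  refine intervalIntegral.integral_congr_uIoo fun t ht => ?_
  rw [uIoo_of_le (hmono n hn.1 hn.2).le] at ht
  exact hFeq n hn.1 hn.2 t ht

lemma integral_empDist (N : ℕ) (x : ℕ → ℝ) (h : ℝ → ℝ) :
    ∫ t, h t ∂(empDist N x) = (N : ℝ)⁻¹ * ∑ n ∈ Finset.Icc 1 N, h (x n) := by
  rw [empDist, integral_smul_measure, integral_finsetSum_measure]
  · simp
  · intro n _
    exact integrable_dirac (by simp)

/-- Splitting each point between its two adjacent gaps, before normalization. At `M = N`, `c = N`
the right-hand side is `(N - 1) ∑_{n=1}^N y_n`; the general `M` is there for the induction. -/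
lemma sum_endpoint_weights (c : ℝ) (y : ℕ → ℝ) {M : ℕ} (hM : 1 ≤ M) :
    ∑ n ∈ Finset.Ico 1 M, ((c - n) * y n + n * y (n + 1))
      = (c - 1) * ∑ n ∈ Finset.Ico 1 M, y n + ((M : ℝ) - 1) * y M := by
  induction M, hM using Nat.le_induction with
  | base => simp
  | succ k hk ih =>
    rw [Finset.sum_Ico_succ_top hk, Finset.sum_Ico_succ_top hk, ih]
    push_cast
    ring

lemma abs_average_sub_le {h : ℝ → ℝ} (hh : LipschitzWith 1 h) {a b c : ℝ} (hab : a < b)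
    (hc : c ∈ Icc a b) : |(b - a)⁻¹ * (∫ t in a..b, h t) - h c| ≤ b - a := by
  have hpos := sub_pos.2 hab
  have e : (b - a)⁻¹ * (∫ t in a..b, h t) - h c = (b - a)⁻¹ * ∫ t in a..b, (h t - h c) := by
    rw [intervalIntegral.integral_sub (hh.continuous.intervalIntegrable _ _)
      (continuous_const.intervalIntegrable _ _), intervalIntegral.integral_const, smul_eq_mul]
    field_simp
  have hb : ‖∫ t in a..b, (h t - h c)‖ ≤ (b - a) * |b - a| := by
    refine intervalIntegral.norm_integral_le_of_norm_le_const fun t ht => ?_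
    rw [uIoc_of_le hab.le] at ht
    have := hh.dist_le_mul t c
    rw [Real.dist_eq, Real.dist_eq, NNReal.coe_one, one_mul] at this
    rw [Real.norm_eq_abs]
    refine this.trans (abs_le.2 ⟨?_, ?_⟩) <;> linarith [ht.1, ht.2, hc.1, hc.2]
  rw [e, abs_mul, abs_of_pos (inv_pos.2 hpos), inv_mul_le_iff₀ hpos]
  rwa [Real.norm_eq_abs, abs_of_pos hpos] at hb

/-- On one gap, the mean of `h` for the uniform law differs by at most the gap length from its mean
for any law carried by the two endpoints, here with weight `w` at the right one. -/
lemma gap_bound {h : ℝ → ℝ} (hh : LipschitzWith 1 h) {a b w : ℝ} (hab : a < b)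
    (hw0 : 0 ≤ w) (hw1 : w ≤ 1) :
    |(b - a)⁻¹ * (∫ t in a..b, h t) - ((1 - w) * h a + w * h b)| ≤ b - a := by
  have ha := abs_le.1 (abs_average_sub_le hh hab (left_mem_Icc.2 hab.le))
  have hb := abs_le.1 (abs_average_sub_le hh hab (right_mem_Icc.2 hab.le))
  rw [abs_le]
  constructor <;> nlinarith [ha.1, ha.2, hb.1, hb.2]

theorem intermediate_empirical_coupling_bound (N : ℕ) (hN : 2 ≤ N) (x : ℕ → ℝ)
    (hmono : ∀ n, 1 ≤ n → n < N → x n < x (n + 1)) :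
    ∀ h : ℝ → ℝ, LipschitzWith 1 h →
      |(∫ t, h t ∂(interDist N x)) - ∫ t, h t ∂(empDist N x)|
        ≤ (x N - x 1) / ((N : ℝ) - 1) := by
  intro h hh
  have hN2 : (2 : ℝ) ≤ N := by exact_mod_cast hN
  have hN0 : (0 : ℝ) < N := by linarith
  have hN1 : (0 : ℝ) < (N : ℝ) - 1 := by linarith
  have hQ : (N : ℝ)⁻¹ * ∑ n ∈ Finset.Icc 1 N, h (x n)
      = ((N : ℝ) - 1)⁻¹ * ∑ n ∈ Finset.Ico 1 N,
        ((1 - (n : ℝ) / N) * h (x n) + (n : ℝ) / N * h (x (n + 1))) := by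
    have e := sum_endpoint_weights (N : ℝ) (fun n => h (x n)) (by omega : 1 ≤ N)
    have e2 : ∑ n ∈ Finset.Icc 1 N, h (x n) = ∑ n ∈ Finset.Ico 1 N, h (x n) + h (x N) := by
      rw [← Finset.sum_Ico_succ_top (by omega : 1 ≤ N)]
      rfl
    have e3 : ∑ n ∈ Finset.Ico 1 N,
        ((1 - (n : ℝ) / N) * h (x n) + (n : ℝ) / N * h (x (n + 1)))
        = (N : ℝ)⁻¹ * ∑ n ∈ Finset.Ico 1 N,
          (((N : ℝ) - n) * h (x n) + n * h (x (n + 1))) := by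
      rw [Finset.mul_sum]
      refine Finset.sum_congr rfl fun n _ => ?_
      field_simp
    rw [e3, e, e2]
    field_simp
  have hR : ∫ t, h t ∂(interDist N x) = ((N : ℝ) - 1)⁻¹ * ∑ n ∈ Finset.Ico 1 N,
      (x (n + 1) - x n)⁻¹ * ∫ t in x n..x (n + 1), h t := by
    rw [integral_interDist hN hmono hh.continuous, Finset.mul_sum]
    refine Finset.sum_congr rfl fun n _ => ?_
    rw [one_div, mul_inv, mul_assoc]
  rw [hR, integral_empDist, hQ, ← mul_sub, ← Finset.sum_sub_distrib, abs_mul,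
    abs_of_pos (inv_pos.2 hN1), div_eq_inv_mul]
  refine mul_le_mul_of_nonneg_left ?_ (inv_pos.2 hN1).le
  refine (Finset.abs_sum_le_sum_abs _ _).trans ?_
  rw [← Finset.sum_Ico_sub x (by omega : 1 ≤ N)]
  refine Finset.sum_le_sum fun n hn => ?_
  rw [Finset.mem_Ico] at hn
  have hnN : (n : ℝ) ≤ N := by exact_mod_cast hn.2.le
  exact gap_bound hh (hmono n hn.1 hn.2) (by positivity) ((div_le_one hN0).2 hnN)
end
end
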